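/- Let A⁺ ⊆ ℝⁿ be a finite nonempty set, let β ∈ ℝⁿ with β ∉ A⁺, let c_α ≥ 0 for all α ∈ A⁺ and let c_β < 0. Then the exponential sum f(x) = ∑_{α∈A⁺} c_α·exp(⟨x,α⟩) + c_β·exp(⟨x,β⟩) is nonnegative for all x ∈ ℝⁿ if and only if there exists λ ∈ Λ(A⁺,β) such that −c_β ≤ ∏_{α∈A⁺, λ_α>0} (c_α/λ_α)^{λ_α}. -/

import Mathlib

open Finset

/-- `Λ(A⁺, β)`: barycentric coordinates of `β` with respect to `A⁺`. -/
def IsBary {n : ℕ} (Ap : Finset (Fin n → ℝ)) (β : Fin n → ℝ) (lam : (Fin n → ℝ) → ℝ) : Prop :=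
  (∀ α ∈ Ap, 0 ≤ lam α) ∧ (∑ α ∈ Ap, lam α = 1) ∧ (∑ α ∈ Ap, lam α • α = β)

/-!
Put `b = -cβ`. Dividing by `exp ⟨x, β⟩`, nonnegativity says that the subspace of all vectors
`y = (⟨x, α - β⟩)_α` misses the open convex set `{y | ∑ c_α exp y_α < b}`. A functional
vanishing on the subspace and negative on this set, scaled to take the value `1` on the constant
vector `1`, is `y ↦ ∑ λ_α y_α` with `λ ∈ Λ(A⁺, β)`, and translating `y` by constants turns the
separation into `b exp (∑ λ_α y_α) ≤ ∑ c_α exp y_α` for all `y`. By weighted AM-GM, sharp at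
`exp y_α = λ_α / c_α`, this is the product inequality.
-/

open Filter Topology

theorem exists_strongDual_neg_of_disjoint_submodule {E : Type*} [TopologicalSpace E]
    [AddCommGroup E] [Module ℝ E] [IsTopologicalAddGroup E] [ContinuousSMul ℝ E]
    {U : Set E} (hconv : Convex ℝ U) (hopen : IsOpen U) {V : Submodule ℝ E}
    (hUV : Disjoint U (V : Set E)) :
    ∃ f : StrongDual ℝ E, (∀ u ∈ U, f u < 0) ∧ ∀ v ∈ V, f v = 0 := by
  obtain ⟨f, r, hU, hV⟩ := geometric_hahn_banach_open hconv hopen V.convex hUV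
  have hr : r ≤ 0 := by simpa using hV 0 V.zero_mem
  refine ⟨f, fun u hu ↦ (hU u hu).trans_le hr, fun v hv ↦ ?_⟩
  by_contra hfv
  have hrf := hV (((r - 1) / f v) • v) (V.smul_mem _ hv)
  rw [map_smul, smul_eq_mul, div_mul_cancel₀ _ hfv] at hrf
  linarith

section ExponentialSums

variable {ι : Type*} {s : Finset ι} {c w : ι → ℝ} {b : ℝ}

theorem exists_neg_mul_exp_lt (a : ℝ) (hb : 0 < b) : ∃ t < 0, a * Real.exp t < b := by
  have hlim : Tendsto (fun t ↦ a * Real.exp t) atBot (𝓝 0) := by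
    simpa using Real.tendsto_exp_atBot.const_mul a
  exact ((eventually_lt_atBot 0).and (hlim.eventually_lt_const hb)).exists

theorem convexOn_sum_mul_exp (hc : ∀ i ∈ s, 0 ≤ c i) :
    ConvexOn ℝ Set.univ fun y : ι → ℝ ↦ ∑ i ∈ s, c i * Real.exp (y i) := by
  induction s using Finset.cons_induction with
  | empty => simpa using convexOn_const (𝕜 := ℝ) 0 (convex_univ (E := ι → ℝ))
  | cons i s hi ih =>
    rw [forall_mem_cons] at hc
    simp only [sum_cons]
    exact ((convexOn_exp.comp_linearMap (LinearMap.proj i)).smul hc.1).add (ih hc.2)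

theorem exists_linearMap_mul_exp_le_sum_mul_exp (hc : ∀ i ∈ s, 0 ≤ c i) (hb : 0 < b)
    {V : Submodule ℝ (ι → ℝ)} (hV : ∀ v ∈ V, b ≤ ∑ i ∈ s, c i * Real.exp (v i)) :
    ∃ g : (ι → ℝ) →ₗ[ℝ] ℝ, g 1 = 1 ∧ (∀ v ∈ V, g v = 0) ∧
      ∀ y, b * Real.exp (g y) ≤ ∑ i ∈ s, c i * Real.exp (y i) := by
  let U : Set (ι → ℝ) := {y | ∑ i ∈ s, c i * Real.exp (y i) < b}
  have hconv : Convex ℝ U := by simpa [U] using (convexOn_sum_mul_exp hc).convex_lt b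
  have hopen : IsOpen U := isOpen_lt (by fun_prop) continuous_const
  have hUV : Disjoint U (V : Set (ι → ℝ)) :=
    Set.disjoint_left.2 fun y hyU hyV ↦ (hV y hyV).not_gt hyU
  obtain ⟨f, hfU, hfV⟩ := exists_strongDual_neg_of_disjoint_submodule hconv hopen hUV
  have hf1 : 0 < f 1 := by
    obtain ⟨t, ht, htb⟩ := exists_neg_mul_exp_lt (∑ i ∈ s, c i) hb
    have hft : t * f 1 < 0 := by
      simpa using hfU (t • 1) (by simpa [U, ← sum_mul] using htb)
    exact pos_of_mul_neg_right hft ht.le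
  let g : (ι → ℝ) →ₗ[ℝ] ℝ := (f 1)⁻¹ • f.toLinearMap
  have hg1 : g 1 = 1 := by simp [g, hf1.ne']
  refine ⟨g, hg1, fun v hv ↦ by simp [g, hfV v hv], fun y ↦ ?_⟩
  by_contra! hlt
  have hmem : y - g y • 1 ∈ U := by
    simpa [U, Real.exp_sub, mul_div_assoc', ← sum_div, div_lt_iff₀ (Real.exp_pos _)] using hlt
  have hneg : g (y - g y • 1) < 0 := mul_neg_of_pos_of_neg (inv_pos.2 hf1) (hfU _ hmem)
  simp [hg1] at hneg

section Weights

variable {g : (ι → ℝ) →ₗ[ℝ] ℝ}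

theorem map_nonpos_of_mul_exp_le_sum_mul_exp (hc : ∀ i ∈ s, 0 ≤ c i) (hb : 0 < b)
    (hg : ∀ y, b * Real.exp (g y) ≤ ∑ i ∈ s, c i * Real.exp (y i))
    {y : ι → ℝ} (hy : ∀ i ∈ s, y i ≤ 0) : g y ≤ 0 := by
  by_contra! hpos
  have hbdd : ∀ t : ℝ, 0 ≤ t → b * Real.exp (t * g y) ≤ ∑ i ∈ s, c i := fun t ht ↦ by
    calc b * Real.exp (t * g y) = b * Real.exp (g (t • y)) := by simp
      _ ≤ ∑ i ∈ s, c i * Real.exp (t * y i) := hg (t • y)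
      _ ≤ ∑ i ∈ s, c i := sum_le_sum fun i hi ↦ mul_le_of_le_one_right (hc i hi)
          (Real.exp_le_one_iff.2 (mul_nonpos_of_nonneg_of_nonpos ht (hy i hi)))
  have hlim : Tendsto (fun t ↦ b * Real.exp (t * g y)) atTop atTop :=
    (Real.tendsto_exp_atTop.comp (tendsto_id.atTop_mul_const hpos)).const_mul_atTop hb
  obtain ⟨t, ht, hlt⟩ :=
    ((eventually_ge_atTop 0).and (hlim.eventually_gt_atTop (∑ i ∈ s, c i))).exists
  exact (hbdd t ht).not_gt hlt

theorem exists_nonneg_weights_of_mul_exp_le_sum_mul_exp (hc : ∀ i ∈ s, 0 ≤ c i) (hb : 0 < b)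
    (hg : ∀ y, b * Real.exp (g y) ≤ ∑ i ∈ s, c i * Real.exp (y i)) :
    ∃ w : ι → ℝ, (∀ i ∈ s, 0 ≤ w i) ∧ ∀ y, g y = ∑ i ∈ s, w i * y i := by
  classical
  have hnonpos {y : ι → ℝ} := map_nonpos_of_mul_exp_le_sum_mul_exp hc hb hg (y := y)
  refine ⟨fun i ↦ g (Pi.single i 1), fun i _ ↦ ?_, fun y ↦ ?_⟩
  · have hsingle : (0 : ι → ℝ) ≤ Pi.single i 1 := Pi.single_nonneg.2 zero_le_one
    have hneg : g (-Pi.single i 1) ≤ 0 := hnonpos fun j _ ↦ neg_nonpos.2 (hsingle j)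
    simpa using hneg
  · let p : ι → ℝ := ∑ i ∈ s, y i • Pi.single i 1
    have hp : ∀ i ∈ s, p i = y i := fun i hi ↦ by simp [p, Pi.single_apply, hi]
    have hle : g (y - p) ≤ 0 := hnonpos fun i hi ↦ by simp [hp i hi]
    have hge : g (p - y) ≤ 0 := hnonpos fun i hi ↦ by simp [hp i hi]
    rw [map_sub, sub_nonpos] at hle hge
    calc g y = g p := le_antisymm hle hge
      _ = ∑ i ∈ s, g (Pi.single i 1) * y i := by simp [p, mul_comm]

end Weights

theorem exists_weights_mul_exp_sum_le_sum_mul_exp (hc : ∀ i ∈ s, 0 ≤ c i) (hb : 0 < b)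
    {V : Submodule ℝ (ι → ℝ)} (hV : ∀ v ∈ V, b ≤ ∑ i ∈ s, c i * Real.exp (v i)) :
    ∃ w : ι → ℝ, (∀ i ∈ s, 0 ≤ w i) ∧ ∑ i ∈ s, w i = 1 ∧ (∀ v ∈ V, ∑ i ∈ s, w i * v i = 0) ∧
      ∀ y : ι → ℝ, b * Real.exp (∑ i ∈ s, w i * y i) ≤ ∑ i ∈ s, c i * Real.exp (y i) := by
  obtain ⟨g, hg1, hgV, hg⟩ := exists_linearMap_mul_exp_le_sum_mul_exp hc hb hV
  obtain ⟨w, hw, hgw⟩ := exists_nonneg_weights_of_mul_exp_le_sum_mul_exp hc hb hg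
  simp only [hgw] at hgV hg
  exact ⟨w, hw, by simpa [hg1] using (hgw 1).symm, hgV, hg⟩

theorem prod_filter_pos_rpow (hw : ∀ i ∈ s, 0 ≤ w i) (z : ι → ℝ) :
    ∏ i ∈ s with 0 < w i, z i ^ w i = ∏ i ∈ s, z i ^ w i :=
  prod_filter_of_ne fun i hi hne ↦
    (hw i hi).lt_of_ne fun h0 ↦ hne (by rw [← h0, Real.rpow_zero])

theorem prod_div_rpow_mul_exp_le_sum_mul_exp (hc : ∀ i ∈ s, 0 ≤ c i) (hw : ∀ i ∈ s, 0 ≤ w i)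
    (hw1 : ∑ i ∈ s, w i = 1) (y : ι → ℝ) :
    (∏ i ∈ s, (c i / w i) ^ w i) * Real.exp (∑ i ∈ s, w i * y i) ≤
      ∑ i ∈ s, c i * Real.exp (y i) := by
  have hdiv : ∀ i ∈ s, 0 ≤ c i / w i := fun i hi ↦ div_nonneg (hc i hi) (hw i hi)
  calc (∏ i ∈ s, (c i / w i) ^ w i) * Real.exp (∑ i ∈ s, w i * y i)
      = ∏ i ∈ s, (c i / w i * Real.exp (y i)) ^ w i := by
        rw [Real.exp_sum, ← prod_mul_distrib]
        refine prod_congr rfl fun i hi ↦ ?_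
        rw [Real.mul_rpow (hdiv i hi) (Real.exp_nonneg _), ← Real.exp_mul, mul_comm (w i)]
    _ ≤ ∑ i ∈ s, w i * (c i / w i * Real.exp (y i)) :=
        Real.geom_mean_le_arith_mean_weighted s w _ hw hw1
          fun i hi ↦ mul_nonneg (hdiv i hi) (Real.exp_nonneg _)
    _ ≤ ∑ i ∈ s, c i * Real.exp (y i) := sum_le_sum fun i hi ↦ by
        rw [← mul_assoc, mul_div_left_comm]
        gcongr
        exact mul_le_of_le_one_right (hc i hi) (div_self_le_one (w i))

theorem mul_prod_rpow_le_sum_mul_of_mul_exp_le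
    (h : ∀ y : ι → ℝ, b * Real.exp (∑ i ∈ s, w i * y i) ≤ ∑ i ∈ s, c i * Real.exp (y i))
    {z : ι → ℝ} (hz : ∀ i ∈ s, 0 < z i) :
    b * ∏ i ∈ s, z i ^ w i ≤ ∑ i ∈ s, c i * z i := by
  have hsum : ∑ i ∈ s, c i * Real.exp (Real.log (z i)) = ∑ i ∈ s, c i * z i :=
    sum_congr rfl fun i hi ↦ by rw [Real.exp_log (hz i hi)]
  have hprod : Real.exp (∑ i ∈ s, w i * Real.log (z i)) = ∏ i ∈ s, z i ^ w i := by
    rw [Real.exp_sum]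
    exact prod_congr rfl fun i hi ↦ by rw [Real.rpow_def_of_pos (hz i hi), mul_comm]
  simpa only [hsum, hprod] using h fun i ↦ Real.log (z i)

theorem mul_prod_add_rpow_le (hc : ∀ i ∈ s, 0 ≤ c i) (hw : ∀ i ∈ s, 0 ≤ w i)
    (h : ∀ z : ι → ℝ, (∀ i ∈ s, 0 < z i) → b * ∏ i ∈ s, z i ^ w i ≤ ∑ i ∈ s, c i * z i)
    {ε : ℝ} (hε : 0 < ε) :
    b * ∏ i ∈ s, (w i + ε) ^ w i ≤ (∑ i ∈ s, (w i + ε)) * ∏ i ∈ s, (c i + ε) ^ w i := by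
  have hwε : ∀ i ∈ s, 0 < w i + ε := fun i hi ↦ add_pos_of_nonneg_of_pos (hw i hi) hε
  have hcε : ∀ i ∈ s, 0 < c i + ε := fun i hi ↦ add_pos_of_nonneg_of_pos (hc i hi) hε
  rw [← div_le_iff₀ (prod_pos fun i hi ↦ Real.rpow_pos_of_pos (hcε i hi) _)]
  calc (b * ∏ i ∈ s, (w i + ε) ^ w i) / ∏ i ∈ s, (c i + ε) ^ w i
      = b * ∏ i ∈ s, ((w i + ε) / (c i + ε)) ^ w i := by
        rw [mul_div_assoc, ← prod_div_distrib]
        congr 1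
        exact prod_congr rfl fun i hi ↦ (Real.div_rpow (hwε i hi).le (hcε i hi).le _).symm
    _ ≤ ∑ i ∈ s, c i * ((w i + ε) / (c i + ε)) := h _ fun i hi ↦ div_pos (hwε i hi) (hcε i hi)
    _ ≤ ∑ i ∈ s, (w i + ε) := sum_le_sum fun i hi ↦ by
        rw [mul_div_left_comm]
        exact mul_le_of_le_one_right (hwε i hi).le
          (div_le_one_of_le₀ (le_add_of_nonneg_right hε.le) (hcε i hi).le)

theorem mul_prod_rpow_le_prod_rpow (hc : ∀ i ∈ s, 0 ≤ c i) (hw : ∀ i ∈ s, 0 ≤ w i)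
    (hw1 : ∑ i ∈ s, w i = 1)
    (h : ∀ z : ι → ℝ, (∀ i ∈ s, 0 < z i) → b * ∏ i ∈ s, z i ^ w i ≤ ∑ i ∈ s, c i * z i) :
    b * ∏ i ∈ s, w i ^ w i ≤ ∏ i ∈ s, c i ^ w i := by
  -- The optimal `z i = w i / c i` may vanish, or be a division by zero; hence the perturbation.
  have hperturbed : ∀ ε ∈ Set.Ioi (0 : ℝ), b * ∏ i ∈ s, (w i + ε) ^ w i ≤
      (∑ i ∈ s, (w i + ε)) * ∏ i ∈ s, (c i + ε) ^ w i :=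
    fun ε hε ↦ mul_prod_add_rpow_le hc hw h hε
  have hcont (z : ι → ℝ) : Continuous fun ε : ℝ ↦ ∏ i ∈ s, (z i + ε) ^ w i :=
    continuous_finsetProd _ fun i hi ↦
      (continuous_const_add (z i)).rpow_const fun _ ↦ .inr (hw i hi)
  have hsum : Continuous fun ε : ℝ ↦ ∑ i ∈ s, (w i + ε) := by fun_prop
  have hzero := le_on_closure hperturbed ((hcont w).const_mul b).continuousOn
    (hsum.mul (hcont c)).continuousOn (closure_Ioi (0 : ℝ) ▸ Set.self_mem_Ici)
  simpa [hw1] using hzero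

theorem le_prod_div_rpow_iff (hc : ∀ i ∈ s, 0 ≤ c i) (hw : ∀ i ∈ s, 0 ≤ w i)
    (hw1 : ∑ i ∈ s, w i = 1) :
    b ≤ ∏ i ∈ s with 0 < w i, (c i / w i) ^ w i ↔
      ∀ y : ι → ℝ, b * Real.exp (∑ i ∈ s, w i * y i) ≤ ∑ i ∈ s, c i * Real.exp (y i) := by
  rw [prod_filter_pos_rpow hw fun i ↦ c i / w i]
  refine ⟨fun h y ↦ (mul_le_mul_of_nonneg_right h (Real.exp_nonneg _)).trans
    (prod_div_rpow_mul_exp_le_sum_mul_exp hc hw hw1 y), fun h ↦ ?_⟩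
  have hpos : 0 < ∏ i ∈ s, w i ^ w i := prod_pos fun i hi ↦ by
    rcases (hw i hi).eq_or_lt with h0 | h0
    · simp [← h0]
    · positivity
  rw [prod_congr rfl fun i hi ↦ Real.div_rpow (hc i hi) (hw i hi) (w i), prod_div_distrib,
    le_div_iff₀ hpos]
  exact mul_prod_rpow_le_prod_rpow hc hw hw1 fun _ ↦ mul_prod_rpow_le_sum_mul_of_mul_exp_le h

end ExponentialSums

theorem age_nonneg_iff_exists_bary_general {X E ι : Type*} [AddCommGroup X] [Module ℝ X]
    [AddCommGroup E] [Module ℝ E] {B : X →ₗ[ℝ] E →ₗ[ℝ] ℝ} (hB : B.SeparatingRight)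
    (s : Finset ι) (a : ι → E) (β : E) (c : ι → ℝ) (hc : ∀ i ∈ s, 0 ≤ c i)
    (cβ : ℝ) (hcβ : cβ < 0) :
    (∀ x, 0 ≤ (∑ i ∈ s, c i * Real.exp (B x (a i))) + cβ * Real.exp (B x β)) ↔
      ∃ w : ι → ℝ, ((∀ i ∈ s, 0 ≤ w i) ∧ ∑ i ∈ s, w i = 1 ∧ ∑ i ∈ s, w i • a i = β) ∧
        -cβ ≤ ∏ i ∈ s with 0 < w i, (c i / w i) ^ w i := by
  constructor
  · intro h
    let V : Submodule ℝ (ι → ℝ) := (LinearMap.pi fun i ↦ B.flip (a i - β)).range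
    have hV : ∀ v ∈ V, -cβ ≤ ∑ i ∈ s, c i * Real.exp (v i) := by
      rintro _ ⟨x, rfl⟩
      have hx : -cβ * Real.exp (B x β) ≤ ∑ i ∈ s, c i * Real.exp (B x (a i)) := by
        linarith [h x]
      simpa [Real.exp_sub, mul_div_assoc', ← sum_div, le_div_iff₀ (Real.exp_pos _)] using hx
    obtain ⟨w, hw, hw1, hwV, hle⟩ :=
      exists_weights_mul_exp_sum_le_sum_mul_exp hc (neg_pos.2 hcβ) hV
    have hwβ : ∑ i ∈ s, w i • a i - β = 0 := hB _ fun x ↦ by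
      simpa [mul_sub, ← sum_mul, hw1] using hwV _ ⟨x, rfl⟩
    exact ⟨w, ⟨hw, hw1, sub_eq_zero.1 hwβ⟩, (le_prod_div_rpow_iff hc hw hw1).2 hle⟩
  · rintro ⟨w, ⟨hw, hw1, hwβ⟩, hle⟩ x
    have hxβ : B x β = ∑ i ∈ s, w i * B x (a i) := by simp [← hwβ]
    have hbound := (le_prod_div_rpow_iff hc hw hw1).1 hle fun i ↦ B x (a i)
    rw [hxβ]
    linarith

/-- An AGE exponential sum is nonnegative iff some barycentric coordinate
vector satisfies the circuit-number inequality. -/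
theorem age_nonneg_iff_exists_bary {n : ℕ}
    (Ap : Finset (Fin n → ℝ)) (hAp : Ap.Nonempty)
    (β : Fin n → ℝ) (hβ : β ∉ Ap)
    (c : (Fin n → ℝ) → ℝ) (hc : ∀ α ∈ Ap, 0 ≤ c α) (cβ : ℝ) (hcβ : cβ < 0) :
    (∀ x : Fin n → ℝ,
        0 ≤ (∑ α ∈ Ap, c α * Real.exp (∑ i, x i * α i)) + cβ * Real.exp (∑ i, x i * β i))
      ↔ ∃ lam : (Fin n → ℝ) → ℝ, IsBary Ap β lam ∧
          -cβ ≤ ∏ α ∈ Ap.filter (fun α => 0 < lam α), (c α / lam α) ^ (lam α) :=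
  age_nonneg_iff_exists_bary_general (B := dotProductBilin ℝ ℝ)
    (fun y hy ↦ dotProduct_eq_zero y fun x ↦ (dotProduct_comm y x).trans (hy x))
    Ap id β c hc cβ hcβ
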